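/- Impossibility of the third alternative in the stopping time argument (Section 6, Case 3): Let u be a weak solution to the parabolic double-phase system. Let z ∈ Ω_T, λ ≥ 1 and ρ > 0 be such that Q_ρ^λ(z) ⊂ Ω_T and ⨍⨍_{Q_ρ^λ(z)} (|∇u|^p + a(w)|∇u|^q + |F|^p + a(w)|F|^q) dw = λ^p. If moreover a(z) ≤ 2[a]_α(10ρ)^α, then K λ^p > a(z) λ^q; equivalently, the two conditions K λ^p ≤ a(z) λ^q and a(z) ≤ 2[a]_α(10ρ)^α cannot hold simultaneously. -/

import Mathlib

noncomputable section

open MeasureTheory Set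
open scoped ENNReal RealInnerProductSpace Topology

namespace DoublePhase

abbrev Rn (n : ℕ) : Type := EuclideanSpace ℝ (Fin n)
abbrev RN (N : ℕ) : Type := EuclideanSpace ℝ (Fin N)
abbrev RNn (N n : ℕ) : Type := EuclideanSpace ℝ (Fin N × Fin n)

variable {n N : ℕ}

/-- Time derivative of a space-time test function. -/
def timeDeriv (φ : Rn n × ℝ → RN N) (z : Rn n × ℝ) : RN N :=
  (EuclideanSpace.equiv (Fin N) ℝ).symm fun i => deriv (fun s => φ (z.1, s) i) z.2

/-- Spatial gradient of a space-time test function, as an `ℝ^{Nn}`-valued map. -/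
def spaceGrad (φ : Rn n × ℝ → RN N) (z : Rn n × ℝ) : RNn N n :=
  (EuclideanSpace.equiv (Fin N × Fin n) ℝ).symm fun ij =>
    fderiv ℝ (fun x => φ (x, z.2) ij.1) z.1 (EuclideanSpace.single ij.2 1)

/-- The standard parabolic cylinder `Q_r(z₀) = B_r(x₀) × (t₀ - r², t₀ + r²)`. -/
def Qcyl (z₀ : Rn n × ℝ) (r : ℝ) : Set (Rn n × ℝ) :=
  Metric.ball z₀.1 r ×ˢ Ioo (z₀.2 - r ^ 2) (z₀.2 + r ^ 2)

/-- The cylinder `Q_{R,S}(z₀) = B_R(x₀) × (t₀ - S, t₀ + S)`. -/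
def QRS (z₀ : Rn n × ℝ) (R S' : ℝ) : Set (Rn n × ℝ) :=
  Metric.ball z₀.1 R ×ˢ Ioo (z₀.2 - S') (z₀.2 + S')

/-- Weak solution to the parabolic double-phase system
`u_t - div 𝒜(z, ∇u) = - div (|F|^{p-2} F + a(z) |F|^{q-2} F)` in `Ω_T = Ω × (0,T)`.
Here `du` denotes the (weak) spatial gradient `∇u`. -/
structure IsWeakSolution (p q : ℝ) (Ω : Set (Rn n)) (T : ℝ)
    (a : Rn n × ℝ → ℝ) (A : Rn n × ℝ → RNn N n → RNn N n)
    (u : Rn n × ℝ → RN N) (du F : Rn n × ℝ → RNn N n) : Prop where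
  meas_u : Measurable u
  meas_du : Measurable du
  cont_L2 : ∀ t₀ ∈ Ioo (0:ℝ) T, Filter.Tendsto
      (fun t => ∫ x in Ω, ‖u (x, t) - u (x, t₀)‖ ^ 2)
      (nhdsWithin t₀ (Ioo (0:ℝ) T)) (nhds 0)
  mem_L2 : ∀ t ∈ Ioo (0:ℝ) T, IntegrableOn (fun x => ‖u (x, t)‖ ^ 2) Ω
  mem_LqW1q : IntegrableOn (fun z => ‖u z‖ ^ q + ‖du z‖ ^ q) (Ω ×ˢ Ioo 0 T)
  weak_grad : ∀ ψ : Rn n × ℝ → ℝ, ContDiff ℝ (⊤ : ℕ∞) ψ →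
      tsupport ψ ⊆ Ω ×ˢ Ioo 0 T → ∀ i : Fin N, ∀ j : Fin n,
      ∫ z in Ω ×ˢ Ioo 0 T,
        u z i * fderiv ℝ (fun x => ψ (x, z.2)) z.1 (EuclideanSpace.single j 1)
      = - ∫ z in Ω ×ˢ Ioo 0 T, du z (i, j) * ψ z
  weak_form : ∀ φ : Rn n × ℝ → RN N, ContDiff ℝ (⊤ : ℕ∞) φ →
      tsupport φ ⊆ Ω ×ˢ Ioo 0 T →
      ∫ z in Ω ×ˢ Ioo 0 T,
        (-(⟪u z, timeDeriv φ z⟫) + ⟪A z (du z), spaceGrad φ z⟫)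
      = ∫ z in Ω ×ˢ Ioo 0 T,
        ⟪(‖F z‖ ^ (p - 2) + a z * ‖F z‖ ^ (q - 2)) • F z, spaceGrad φ z⟫

/-- The standing assumptions of the paper: structure conditions, Hölder continuity of the
coefficient `a`, the relation between `p`, `q` and `α`, and a weak solution `u`. -/
structure Setting (n N : ℕ) where
  p : ℝ
  q : ℝ
  α : ℝ
  ν : ℝ
  L : ℝ
  Ca : ℝ
  Ω : Set (Rn n)
  T : ℝ
  a : Rn n × ℝ → ℝ
  A : Rn n × ℝ → RNn N n → RNn N n
  u : Rn n × ℝ → RN N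
  du : Rn n × ℝ → RNn N n
  F : Rn n × ℝ → RNn N n
  hn : 2 ≤ n
  hN : 1 ≤ N
  hp : 2 ≤ p
  hpq : p < q
  hΩ : IsOpen Ω
  hΩb : Bornology.IsBounded Ω
  hT : 0 < T
  hα : 0 < α ∧ α ≤ 1
  hq : q ≤ p + 2 * α / (n + 2)
  ha_nonneg : ∀ z, 0 ≤ a z
  ha_bdd : BddAbove (a '' (Ω ×ˢ Ioo 0 T))
  hCa : 0 ≤ Ca
  ha_x : ∀ x ∈ Ω, ∀ y ∈ Ω, ∀ t ∈ Ioo (0:ℝ) T, |a (x, t) - a (y, t)| ≤ Ca * ‖x - y‖ ^ α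
  ha_t : ∀ x ∈ Ω, ∀ t ∈ Ioo (0:ℝ) T, ∀ s ∈ Ioo (0:ℝ) T,
      |a (x, t) - a (x, s)| ≤ Ca * |t - s| ^ (α / 2)
  hν : 0 < ν
  hνL : ν ≤ L
  hA_coer : ∀ᵐ z ∂(volume.restrict (Ω ×ˢ Ioo 0 T)), ∀ ξ : RNn N n,
      ν * (‖ξ‖ ^ p + a z * ‖ξ‖ ^ q) ≤ ⟪A z ξ, ξ⟫
  hA_bdd : ∀ᵐ z ∂(volume.restrict (Ω ×ˢ Ioo 0 T)), ∀ ξ : RNn N n,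
      ‖A z ξ‖ ≤ L * (‖ξ‖ ^ (p - 1) + a z * ‖ξ‖ ^ (q - 1))
  hF : IntegrableOn (fun z => ‖F z‖ ^ p + a z * ‖F z‖ ^ q) (Ω ×ˢ Ioo 0 T)
  hsol : IsWeakSolution p q Ω T a A u du F

namespace Setting

variable {n N : ℕ} (S : Setting n N)

/-- The space-time cylinder `Ω_T = Ω × (0,T)`. -/
def ΩT : Set (Rn n × ℝ) := S.Ω ×ˢ Ioo 0 S.T

/-- `H(z, |∇u|) = |∇u|^p + a(z) |∇u|^q`. -/
def Hdu (z : Rn n × ℝ) : ℝ := ‖S.du z‖ ^ S.p + S.a z * ‖S.du z‖ ^ S.q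

/-- `H(z, |F|) = |F|^p + a(z) |F|^q`. -/
def HF (z : Rn n × ℝ) : ℝ := ‖S.F z‖ ^ S.p + S.a z * ‖S.F z‖ ^ S.q

/-- The `(p,q)`-growth function `g_{z₀}(s) = s^p + a(z₀) s^q`. -/
def g (z₀ : Rn n × ℝ) (s : ℝ) : ℝ := s ^ S.p + S.a z₀ * s ^ S.q

/-- `M₁ = ∬_{Ω_T} (|∇u|^p + a|∇u|^q + |F|^p + a|F|^q) dz`. -/
def M1 : ℝ := ∫ z in S.ΩT, (S.Hdu z + S.HF z)

/-- `M₂ = sup_{t ∈ (0,T)} ∫_Ω |u(x,t)|² dx`. -/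
def M2 : ℝ := ⨆ t ∈ Ioo (0:ℝ) S.T, ∫ x in S.Ω, ‖S.u (x, t)‖ ^ 2

/-- `γ = α p / (n+2)`. -/
def gam : ℝ := S.α * S.p / (n + 2)

/-- `M̃₁ = M₁ / (2 |B₁|)`. -/
def Mt1 : ℝ := S.M1 / (2 * (volume (Metric.ball (0 : Rn n) 1)).toReal)

/-- `K = 1 + 40 [a]_α M̃₁^{γ/p}`. -/
def Kc : ℝ := 1 + 40 * S.Ca * S.Mt1 ^ (S.gam / S.p)

/-- The covering constant `c_v = 10 K`. -/
def cv : ℝ := 10 * S.Kc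

/-- The `p`-intrinsic cylinder `Q_ρ^λ(z₀) = B_ρ(x₀) × (t₀ - λ^{2-p}ρ², t₀ + λ^{2-p}ρ²)`. -/
def Qp (z₀ : Rn n × ℝ) (l ρ : ℝ) : Set (Rn n × ℝ) :=
  Metric.ball z₀.1 ρ ×ˢ Ioo (z₀.2 - l ^ (2 - S.p) * ρ ^ 2) (z₀.2 + l ^ (2 - S.p) * ρ ^ 2)

/-- The `(p,q)`-intrinsic cylinder
`G_ρ^λ(z₀) = B_ρ(x₀) × (t₀ - λ²ρ²/g_{z₀}(λ), t₀ + λ²ρ²/g_{z₀}(λ))`. -/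
def Gpq (z₀ : Rn n × ℝ) (l ρ : ℝ) : Set (Rn n × ℝ) :=
  Metric.ball z₀.1 ρ ×ˢ
    Ioo (z₀.2 - l ^ 2 / S.g z₀ l * ρ ^ 2) (z₀.2 + l ^ 2 / S.g z₀ l * ρ ^ 2)

/-- `inf` of the coefficient `a` over a set. -/
def infa (A : Set (Rn n × ℝ)) : ℝ := sInf (S.a '' A)

/-- The super-level set `E(Λ)`. -/
def Eset (Λ : ℝ) : Set (Rn n × ℝ) := {z ∈ S.ΩT | Λ < S.Hdu z}

/-- The super-level set `Φ(Λ)`. -/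
def Φset (Λ : ℝ) : Set (Rn n × ℝ) := {z ∈ S.ΩT | Λ < S.HF z}

/-- `S(u)_{z₀;ρ}^{λ^p}`. -/
def Sp (z₀ : Rn n × ℝ) (l ρ : ℝ) : ℝ :=
  ⨆ t ∈ Ioo (z₀.2 - l ^ (2 - S.p) * ρ ^ 2) (z₀.2 + l ^ (2 - S.p) * ρ ^ 2),
    ⨍ x in Metric.ball z₀.1 ρ, ‖S.u (x, t) - ⨍ w in S.Qp z₀ l ρ, S.u w‖ ^ 2 / ρ ^ 2

/-- `S(u)_{z₀;ρ}^{g(λ)}`. -/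
def SG (z₀ : Rn n × ℝ) (l ρ : ℝ) : ℝ :=
  ⨆ t ∈ Ioo (z₀.2 - l ^ 2 / S.g z₀ l * ρ ^ 2) (z₀.2 + l ^ 2 / S.g z₀ l * ρ ^ 2),
    ⨍ x in Metric.ball z₀.1 ρ, ‖S.u (x, t) - ⨍ w in S.Gpq z₀ l ρ, S.u w‖ ^ 2 / ρ ^ 2

/-- Condition (4.3): `K λ^p ≥ a(z₀) λ^q` and the `p`-intrinsic average bound on `Q_{4ρ}^λ(z₀)`. -/
def cond43 (z₀ : Rn n × ℝ) (l ρ : ℝ) : Prop :=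
  S.a z₀ * l ^ S.q ≤ S.Kc * l ^ S.p ∧
  (⨍ z in S.Qp z₀ l (4 * ρ), (S.Hdu z + S.HF z)) < l ^ S.p

/-- Condition (4.4): `K λ^p ≤ a(z₀) λ^q`, comparability of `a` on `G_{4ρ}^λ(z₀)` and the
`(p,q)`-intrinsic average bound. -/
def cond44 (z₀ : Rn n × ℝ) (l ρ : ℝ) : Prop :=
  S.Kc * l ^ S.p ≤ S.a z₀ * l ^ S.q ∧
  (∀ z ∈ S.Gpq z₀ l (4 * ρ), S.a z₀ / 2 ≤ S.a z ∧ S.a z ≤ 2 * S.a z₀) ∧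
  (⨍ z in S.Gpq z₀ l (4 * ρ), (S.Hdu z + S.HF z)) < S.g z₀ l

/-- Condition (5.1). -/
def cond51 (z₀ : Rn n × ℝ) (l ρ : ℝ) : Prop :=
  S.a z₀ * l ^ S.q ≤ S.Kc * l ^ S.p ∧
  (∀ s ∈ Ioc ρ (S.cv * (2 * ρ)), (⨍ z in S.Qp z₀ l s, (S.Hdu z + S.HF z)) < l ^ S.p) ∧
  (⨍ z in S.Qp z₀ l ρ, (S.Hdu z + S.HF z)) = l ^ S.p

/-- Condition (5.2). -/
def cond52 (z₀ : Rn n × ℝ) (l ρ : ℝ) : Prop :=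
  S.Kc * l ^ S.p ≤ S.a z₀ * l ^ S.q ∧
  (∀ z ∈ S.Gpq z₀ l (4 * ρ), S.a z₀ / 2 ≤ S.a z ∧ S.a z ≤ 2 * S.a z₀) ∧
  (∀ s ∈ Ioc ρ (S.cv * (2 * ρ)), (⨍ z in S.Gpq z₀ l s, (S.Hdu z + S.HF z)) < S.g z₀ l) ∧
  (⨍ z in S.Gpq z₀ l ρ, (S.Hdu z + S.HF z)) = S.g z₀ l

end Setting

/-!
The `p`-intrinsic cylinder `Q_ρ^λ` has volume `2 |B₁| λ^{2-p} ρ^{n+2}`, so an average equal to `λ^p`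
over it forces `ρ^{n+2} λ² ≤ M̃₁`: the total mass bounds the radius at which a level `λ` can be
reached. Raised to the power `α/(n+2)` this reads `ρ^α λ^{2α/(n+2)} ≤ M̃₁^{γ/p}`. Since
`q - p ≤ 2α/(n+2)`, a coefficient of size at most `2 [a]_α (10ρ)^α ≤ 20 [a]_α ρ^α` then satisfies
`a λ^q ≤ 20 [a]_α M̃₁^{γ/p} λ^p`, which is below `K λ^p`.
-/

section RealPowers

theorem rpow_mul_rpow_le_of_pow_mul_sq_le {d : ℕ} {ρ l M α : ℝ} (hρ : 0 ≤ ρ) (hl : 0 ≤ l)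
    (hα : 0 ≤ α) (h : ρ ^ (d + 2) * l ^ 2 ≤ M) :
    ρ ^ α * l ^ (2 * α / (d + 2)) ≤ M ^ (α / (d + 2)) := by
  have hd : ((d : ℝ) + 2) * (α / (d + 2)) = α := by field_simp
  calc ρ ^ α * l ^ (2 * α / (d + 2))
      = (ρ ^ (d + 2)) ^ (α / (d + 2)) * (l ^ 2) ^ (α / (d + 2)) := by
        rw [← Real.rpow_natCast_mul hρ, ← Real.rpow_natCast_mul hl]
        push_cast
        rw [hd, mul_div_assoc]
    _ = (ρ ^ (d + 2) * l ^ 2) ^ (α / (d + 2)) :=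
        (Real.mul_rpow (by positivity) (by positivity)).symm
    _ ≤ M ^ (α / (d + 2)) := by gcongr

theorem mul_rpow_le_mul_rpow_of_one_le {c x α : ℝ} (hc : 1 ≤ c) (hx : 0 ≤ x) (hα : α ≤ 1) :
    (c * x) ^ α ≤ c * x ^ α := by
  rw [Real.mul_rpow (by positivity) hx]
  gcongr
  exact Real.rpow_le_self_of_one_le hc hα

end RealPowers

section IntrinsicCylinder

variable {E : Type*} [NormedAddCommGroup E]

/-- The `p`-intrinsic cylinder `B_ρ(x₀) × (t₀ - l^{2-p}ρ², t₀ + l^{2-p}ρ²)` over a normed space;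
over `ℝⁿ` it is `Setting.Qp`. -/
def intrinsicCylinder (p : ℝ) (z₀ : E × ℝ) (l ρ : ℝ) : Set (E × ℝ) :=
  Metric.ball z₀.1 ρ ×ˢ Ioo (z₀.2 - l ^ (2 - p) * ρ ^ 2) (z₀.2 + l ^ (2 - p) * ρ ^ 2)

variable [NormedSpace ℝ E] [FiniteDimensional ℝ E] [MeasurableSpace E] [BorelSpace E]
  {μ : Measure E} [μ.IsAddHaarMeasure] {p l ρ : ℝ} {U : Set (E × ℝ)} {f : E × ℝ → ℝ}

theorem measureReal_intrinsicCylinder (z₀ : E × ℝ) (hl : 0 ≤ l) (hρ : 0 < ρ) :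
    (μ.prod volume).real (intrinsicCylinder p z₀ l ρ) =
      2 * μ.real (Metric.ball 0 1) * l ^ (2 - p) * ρ ^ (Module.finrank ℝ E + 2) := by
  have hball : μ.real (Metric.ball z₀.1 ρ) =
      ρ ^ Module.finrank ℝ E * μ.real (Metric.ball 0 1) := by
    rw [measureReal_def, Measure.addHaar_ball_of_pos μ z₀.1 hρ, ENNReal.toReal_mul,
      ENNReal.toReal_ofReal (by positivity), measureReal_def]
  have hτ : 0 ≤ l ^ (2 - p) * ρ ^ 2 := by positivity
  rw [intrinsicCylinder, measureReal_prod_prod, hball, Real.volume_real_Ioo_of_le (by linarith)]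
  ring

theorem pow_mul_sq_le_of_rpow_le_setAverage {z₀ : E × ℝ} (hl : 0 < l) (hρ : 0 < ρ)
    (hf : IntegrableOn f U (μ.prod volume)) (hf₀ : 0 ≤ᵐ[(μ.prod volume).restrict U] f)
    (hQ : intrinsicCylinder p z₀ l ρ ⊆ U)
    (hav : l ^ p ≤ ⨍ w in intrinsicCylinder p z₀ l ρ, f w ∂(μ.prod volume)) :
    ρ ^ (Module.finrank ℝ E + 2) * l ^ 2 ≤
      (∫ w in U, f w ∂(μ.prod volume)) / (2 * μ.real (Metric.ball 0 1)) := by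
  set Q := intrinsicCylinder p z₀ l ρ
  have hB : 0 < μ.real (Metric.ball 0 1) :=
    ENNReal.toReal_pos (Metric.measure_ball_pos _ _ one_pos).ne' measure_ball_lt_top.ne
  have hvol := measureReal_intrinsicCylinder (μ := μ) (p := p) z₀ hl.le hρ
  have hvol_pos : 0 < (μ.prod volume).real Q := by rw [hvol]; positivity
  have hpow : l ^ (2 - p) * l ^ p = l ^ 2 := by
    rw [← Real.rpow_add hl, sub_add_cancel, Real.rpow_two]
  rw [le_div_iff₀ (by positivity)]
  calc ρ ^ (Module.finrank ℝ E + 2) * l ^ 2 * (2 * μ.real (Metric.ball 0 1))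
      = (μ.prod volume).real Q * l ^ p := by rw [hvol, ← hpow]; ring
    _ ≤ (μ.prod volume).real Q * ⨍ w in Q, f w ∂(μ.prod volume) := by gcongr
    _ = ∫ w in Q, f w ∂(μ.prod volume) :=
        measure_smul_setAverage f (ENNReal.toReal_pos_iff.mp hvol_pos).2.ne
    _ ≤ ∫ w in U, f w ∂(μ.prod volume) :=
        setIntegral_mono_set hf hf₀ hQ.eventuallyLE

theorem case3_impossible_general {q α a₀ C : ℝ} {z₀ : E × ℝ} (hα : 0 ≤ α) (hα₁ : α ≤ 1)
    (hC : 0 ≤ C) (hq : q ≤ p + 2 * α / (Module.finrank ℝ E + 2)) (hl : 1 ≤ l) (hρ : 0 < ρ)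
    (hf : IntegrableOn f U (μ.prod volume)) (hf₀ : 0 ≤ᵐ[(μ.prod volume).restrict U] f)
    (hQ : intrinsicCylinder p z₀ l ρ ⊆ U)
    (hav : l ^ p ≤ ⨍ w in intrinsicCylinder p z₀ l ρ, f w ∂(μ.prod volume))
    (ha₀ : a₀ ≤ 2 * C * (10 * ρ) ^ α) :
    a₀ * l ^ q < (1 + 40 * C * ((∫ w in U, f w ∂(μ.prod volume)) /
      (2 * μ.real (Metric.ball 0 1))) ^ (α / (Module.finrank ℝ E + 2))) * l ^ p := by
  have hl₀ : 0 < l := one_pos.trans_le hl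
  have hmass := pow_mul_sq_le_of_rpow_le_setAverage hl₀ hρ hf hf₀ hQ hav
  set M := (∫ w in U, f w ∂(μ.prod volume)) / (2 * μ.real (Metric.ball 0 1))
  set θ := 2 * α / ((Module.finrank ℝ E : ℝ) + 2)
  set m := M ^ (α / ((Module.finrank ℝ E : ℝ) + 2))
  have hradius : ρ ^ α * l ^ θ ≤ m := rpow_mul_rpow_le_of_pow_mul_sq_le hρ.le hl₀.le hα hmass
  have hm : 0 ≤ m := le_trans (by positivity) hradius
  have ha : a₀ ≤ 20 * C * ρ ^ α := by
    calc a₀ ≤ 2 * C * (10 * ρ) ^ α := ha₀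
      _ ≤ 2 * C * (10 * ρ ^ α) := by
        gcongr
        exact mul_rpow_le_mul_rpow_of_one_le (by norm_num) hρ.le hα₁
      _ = 20 * C * ρ ^ α := by ring
  have hexp : l ^ q ≤ l ^ θ * l ^ p := by
    rw [← Real.rpow_add hl₀, add_comm θ]
    exact Real.rpow_le_rpow_of_exponent_le hl hq
  calc a₀ * l ^ q ≤ 20 * C * ρ ^ α * (l ^ θ * l ^ p) := by gcongr
    _ = 20 * C * (ρ ^ α * l ^ θ) * l ^ p := by ring
    _ ≤ 20 * C * m * l ^ p := by gcongr
    _ < (1 + 40 * C * m) * l ^ p := by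
        gcongr
        linarith [mul_nonneg hC hm]

end IntrinsicCylinder

section Regularity

theorem continuousOn_prod_of_dist_le {X Y Z : Type*} [PseudoMetricSpace X] [PseudoMetricSpace Y]
    [PseudoMetricSpace Z] {f : X × Y → Z} {s : Set X} {t : Set Y} {ω₁ ω₂ : ℝ → ℝ}
    (hω₁ : Filter.Tendsto ω₁ (𝓝 0) (𝓝 0)) (hω₂ : Filter.Tendsto ω₂ (𝓝 0) (𝓝 0))
    (h₁ : ∀ x ∈ s, ∀ x' ∈ s, ∀ y ∈ t, dist (f (x, y)) (f (x', y)) ≤ ω₁ (dist x x'))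
    (h₂ : ∀ x ∈ s, ∀ y ∈ t, ∀ y' ∈ t, dist (f (x, y)) (f (x, y')) ≤ ω₂ (dist y y')) :
    ContinuousOn f (s ×ˢ t) := by
  rintro ⟨x, y⟩ ⟨hx, hy⟩
  have hfst : Filter.Tendsto (fun w : X × Y => dist w.1 x) (𝓝 (x, y)) (𝓝 0) :=
    Continuous.tendsto' (by fun_prop) _ _ (dist_self x)
  have hsnd : Filter.Tendsto (fun w : X × Y => dist w.2 y) (𝓝 (x, y)) (𝓝 0) :=
    Continuous.tendsto' (by fun_prop) _ _ (dist_self y)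
  have hsum : Filter.Tendsto (fun w : X × Y => ω₁ (dist w.1 x) + ω₂ (dist w.2 y))
      (𝓝[s ×ˢ t] (x, y)) (𝓝 0) := by
    simpa only [add_zero, Function.comp_def] using
      ((hω₁.comp hfst).add (hω₂.comp hsnd)).mono_left nhdsWithin_le_nhds
  refine tendsto_iff_dist_tendsto_zero.2
    (squeeze_zero' (.of_forall fun _ => dist_nonneg) ?_ hsum)
  filter_upwards [self_mem_nhdsWithin] with ⟨x', y'⟩ ⟨hx', hy'⟩
  exact (dist_triangle _ (f (x, y')) _).trans
    (add_le_add (h₁ x' hx' x hx y' hy') (h₂ x hx y' hy' y hy))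

theorem tendsto_const_mul_rpow_nhds_zero {r : ℝ} (hr : 0 < r) (C : ℝ) :
    Filter.Tendsto (fun x : ℝ => C * x ^ r) (𝓝 0) (𝓝 0) :=
  ((Real.continuous_rpow_const hr.le).const_mul C).tendsto' 0 0
    (by rw [Real.zero_rpow hr.ne', mul_zero])

theorem integrable_norm_rpow_add_mul_norm_rpow {X V : Type*} [MeasurableSpace X]
    [NormedAddCommGroup V] {μ : Measure X} [IsFiniteMeasure μ] {p q C : ℝ} {a : X → ℝ}
    {f : X → V} (hp : 0 < p) (hpq : p ≤ q) (ha : AEStronglyMeasurable a μ)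
    (haC : ∀ᵐ x ∂μ, ‖a x‖ ≤ C) (hf : AEStronglyMeasurable f μ)
    (hfq : Integrable (fun x => ‖f x‖ ^ q) μ) :
    Integrable (fun x => ‖f x‖ ^ p + a x * ‖f x‖ ^ q) μ := by
  have hq : 0 < q := hp.trans_le hpq
  have hmem : MemLp f (ENNReal.ofReal q) μ := by
    rw [← integrable_norm_rpow_iff hf (by simpa using hq) ENNReal.ofReal_ne_top,
      ENNReal.toReal_ofReal hq.le]
    exact hfq
  have hfp : Integrable (fun x => ‖f x‖ ^ p) μ := by
    simpa only [ENNReal.toReal_ofReal hp.le] using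
      (hmem.mono_exponent (ENNReal.ofReal_le_ofReal hpq)).integrable_norm_rpow'
  exact hfp.add (hfq.bdd_mul ha haC)

end Regularity

namespace Setting

variable {n N : ℕ} (S : Setting n N)

theorem isOpen_ΩT : IsOpen S.ΩT := S.hΩ.prod isOpen_Ioo

theorem volume_ΩT_lt_top : volume S.ΩT < ∞ :=
  (S.hΩb.prod (Metric.isBounded_Ioo 0 S.T)).measure_lt_top

theorem continuousOn_a : ContinuousOn S.a S.ΩT :=
  continuousOn_prod_of_dist_le
    (tendsto_const_mul_rpow_nhds_zero S.hα.1 S.Ca)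
    (tendsto_const_mul_rpow_nhds_zero (half_pos S.hα.1) S.Ca)
    (fun x hx x' hx' t ht => by
      rw [Real.dist_eq, dist_eq_norm x x']
      exact S.ha_x x hx x' hx' t ht)
    (fun x hx t ht t' ht' => by
      simpa only [Real.dist_eq] using S.ha_t x hx t ht t' ht')

theorem integrableOn_norm_du_rpow : IntegrableOn (fun z => ‖S.du z‖ ^ S.q) S.ΩT := by
  refine S.hsol.mem_LqW1q.mono' (S.hsol.meas_du.norm.pow_const S.q).aestronglyMeasurable
    (.of_forall fun z => ?_)
  rw [Real.norm_of_nonneg (by positivity)]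
  exact le_add_of_nonneg_left (by positivity)

theorem integrableOn_Hdu : IntegrableOn S.Hdu S.ΩT := by
  have hΩT : MeasurableSet S.ΩT := S.isOpen_ΩT.measurableSet
  have : IsFiniteMeasure (volume.restrict S.ΩT) := ⟨by simpa using S.volume_ΩT_lt_top⟩
  obtain ⟨C, hC⟩ := S.ha_bdd
  refine integrable_norm_rpow_add_mul_norm_rpow (C := C) (two_pos.trans_le S.hp) S.hpq.le
    (S.continuousOn_a.aestronglyMeasurable hΩT) ?_ S.hsol.meas_du.aestronglyMeasurable
    S.integrableOn_norm_du_rpow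
  filter_upwards [ae_restrict_mem hΩT] with z hz
  rw [Real.norm_of_nonneg (S.ha_nonneg z)]
  exact hC (mem_image_of_mem S.a hz)

theorem Hdu_add_HF_nonneg (z : Rn n × ℝ) : 0 ≤ S.Hdu z + S.HF z := by
  have := S.ha_nonneg z
  unfold Hdu HF
  positivity

theorem gam_div_p : S.gam / S.p = S.α / (n + 2) := by
  have hp : S.p ≠ 0 := (two_pos.trans_le S.hp).ne'
  rw [gam, div_right_comm, mul_div_cancel_right₀ _ hp]

end Setting

/-- **Section 6, Case 3**: the alternative `K λ^p ≤ a(𝔷) λ^q` together with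
`a(𝔷) ≤ 2 [a]_α (10ρ)^α` is impossible at a stopping point. -/
theorem case3_impossible {n N : ℕ} (S : Setting n N) :
    ∀ z : Rn n × ℝ, ∀ l ρ : ℝ, 1 ≤ l → 0 < ρ → S.Qp z l ρ ⊆ S.ΩT →
      (⨍ w in S.Qp z l ρ, (S.Hdu w + S.HF w)) = l ^ S.p →
      S.a z ≤ 2 * S.Ca * (10 * ρ) ^ S.α →
      S.a z * l ^ S.q < S.Kc * l ^ S.p := by
  intro z l ρ hl hρ hQ hav ha
  simpa only [Setting.Kc, S.gam_div_p, finrank_euclideanSpace_fin] using!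
    case3_impossible_general (μ := volume) S.hα.1.le S.hα.2 S.hCa
      (by simpa only [finrank_euclideanSpace_fin] using S.hq) hl hρ
      (S.integrableOn_Hdu.add S.hF) (.of_forall S.Hdu_add_HF_nonneg) hQ hav.ge ha

end DoublePhase
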